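/- Let k be a field and C a k-linear abelian category, and let A be an object of C with Hom(A,A) and Ext^2(A,A) one-dimensional over k and Ext^i(A,A) = 0 for all i ≥ 1 with i ≠ 2. Then for every n ∈ ℕ the object of type A_n is unique up to isomorphism: any two objects X, X' of D^b(C) of type A_n are isomorphic. (Uniqueness part of Lemma 3.4.) -/

import Mathlib

open CategoryTheory Limits

namespace ThreeCusps

variable (k : Type*) [Field k]
variable {C : Type*} [Category C] [Abelian C] [CategoryTheory.Linear k C]
  [HasDerivedCategory C]

/-- `Hom(A[0], Y)` is one-dimensional over `k`:  it is spanned by a nonzero element `e`,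
where the `k`-action on `Hom((single A), Y)` is induced by precomposition with the scalar
endomorphisms `c • 𝟙 A` of `A` (this is the `k`-linear structure of the derived category
of the `k`-linear category `C`). -/
def HomIsLine (A : C) (Y : DerivedCategory C) : Prop :=
  ∃ e : (DerivedCategory.singleFunctor C 0).obj A ⟶ Y, e ≠ 0 ∧
    ∀ φ : (DerivedCategory.singleFunctor C 0).obj A ⟶ Y,
      ∃ c : k, φ = (DerivedCategory.singleFunctor C 0).map (c • 𝟙 A) ≫ e

/-- The hypotheses (3.3) on the object `A` of the `k`-linear abelian category `C`:
`Hom(A,A)` and `Ext²(A,A)` are one-dimensional over `k` and `Extⁱ(A,A) = 0` for every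
`i ≥ 1` with `i ≠ 2`, where `Extⁱ(A,A) = Hom_{D(C)}(A, A[i])`. -/
def GoodBase (A : C) : Prop :=
  Module.finrank k (A ⟶ A) = 1 ∧
  HomIsLine k A (((DerivedCategory.singleFunctor C 0).obj A)⟦(2 : ℤ)⟧) ∧
  ∀ i : ℕ, 1 ≤ i → i ≠ 2 →
    ∀ φ : (DerivedCategory.singleFunctor C 0).obj A ⟶
        ((DerivedCategory.singleFunctor C 0).obj A)⟦(i : ℤ)⟧, φ = 0

/-- `X` is an object of type `Aₙ` of the (bounded) derived category of `C`:
`Hⁱ(X) ≅ A` for `0 ≤ i ≤ n`, `Hⁱ(X) = 0` otherwise, and `Hom_{D(C)}(A, X[j])` is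
one-dimensional over `k` for `j ∈ {0, n+2}` and vanishes for every other `j ∈ ℤ`. -/
def IsTypeA (A : C) (n : ℕ) (X : DerivedCategory C) : Prop :=
  (∀ i : ℤ, 0 ≤ i → i ≤ (n : ℤ) →
    Nonempty ((DerivedCategory.homologyFunctor C i).obj X ≅ A)) ∧
  (∀ i : ℤ, (i < 0 ∨ (n : ℤ) < i) →
    IsZero ((DerivedCategory.homologyFunctor C i).obj X)) ∧
  (∀ j : ℤ, (j = 0 ∨ j = (n : ℤ) + 2) → HomIsLine k A (X⟦j⟧)) ∧
  (∀ j : ℤ, j ≠ 0 → j ≠ (n : ℤ) + 2 →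
    ∀ φ : (DerivedCategory.singleFunctor C 0).obj A ⟶ X⟦j⟧, φ = 0)

open DerivedCategory Pretriangulated

/-- Only the homology part of the condition: `n` consecutive copies of `A`. -/
def HasHom (A : C) (n : ℕ) (X : DerivedCategory C) : Prop :=
  (∀ i : ℤ, 0 ≤ i → i < (n : ℤ) →
    Nonempty ((DerivedCategory.homologyFunctor C i).obj X ≅ A)) ∧
  (∀ i : ℤ, (i < 0 ∨ (n : ℤ) ≤ i) →
    IsZero ((DerivedCategory.homologyFunctor C i).obj X))

/-- Homology of a shift by one. -/
noncomputable def homShift (Z : DerivedCategory C) (i j : ℤ) (h : 1 + i = j) :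
    (homologyFunctor C i).obj (Z⟦(1 : ℤ)⟧) ≅ (homologyFunctor C j).obj Z :=
  ((homologyFunctor C 0).shiftIso 1 i j h).app Z

theorem isZero_of_hasHom_zero {A : C} {X : DerivedCategory C} (h : HasHom A 0 X) :
    IsZero X := by
  have h1 : X.IsLE 0 := (isLE_iff X 0).2 fun i hi => h.2 i (by right; simp; lia)
  have h2 : X.IsGE 1 := (isGE_iff X 1).2 fun i hi => h.2 i (by simp; lia)
  exact TStructure.t.isZero X 0 1

theorem exists_step {A : C} {n : ℕ} {X : DerivedCategory C} (h : HasHom A (n + 1) X) :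
    ∃ (Z : DerivedCategory C) (f : (singleFunctor C 0).obj A ⟶ X) (g : X ⟶ Z)
      (d : Z ⟶ ((singleFunctor C 0).obj A)⟦(1 : ℤ)⟧),
      Triangle.mk f g d ∈ distTriang _ ∧ Z.IsGE 1 ∧ HasHom A n (Z⟦(1 : ℤ)⟧) := by
  obtain ⟨Y, Z, hY, hZ, f, g, d, hT⟩ := (TStructure.t (C := C)).exists_triangle X 0 1 rfl
  have hY : Y.IsLE 0 := ⟨hY⟩
  have hZ : Z.IsGE 1 := ⟨hZ⟩
  have hY0 : ∀ i : ℤ, 0 < i → IsZero ((homologyFunctor C i).obj Y) :=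
    fun i hi => isZero_of_isLE Y 0 i hi
  have hZ0 : ∀ i : ℤ, i < 1 → IsZero ((homologyFunctor C i).obj Z) :=
    fun i hi => isZero_of_isGE Z 1 i hi
  have iso1 : ∀ i : ℤ, i ≤ 0 → IsIso ((homologyFunctor C i).map f) := by
    intro i hi
    have h1 : Epi ((homologyFunctor C i).map f) :=
      (HomologySequence.epi_homologyMap_mor₁_iff _ hT i).2 ((hZ0 i (by lia)).eq_of_tgt _ _)
    have h2 : Mono ((homologyFunctor C i).map f) :=
      (HomologySequence.mono_homologyMap_mor₁_iff _ hT (i-1) i (by lia)).2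
        ((hZ0 (i-1) (by lia)).eq_of_src _ _)
    exact isIso_of_mono_of_epi _
  have iso2 : ∀ i : ℤ, 1 ≤ i → IsIso ((homologyFunctor C i).map g) := by
    intro i hi
    have h1 : Epi ((homologyFunctor C i).map g) :=
      (HomologySequence.epi_homologyMap_mor₂_iff _ hT i (i+1) rfl).2
        ((hY0 (i+1) (by lia)).eq_of_tgt _ _)
    have h2 : Mono ((homologyFunctor C i).map g) :=
      (HomologySequence.mono_homologyMap_mor₂_iff _ hT i).2
        ((hY0 i (by lia)).eq_of_src _ _)
    exact isIso_of_mono_of_epi _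
  have hY' : Y.IsGE 0 := (isGE_iff Y 0).2 fun i hi => by
    have := iso1 i hi.le
    exact (h.2 i (Or.inl hi)).of_iso (asIso ((homologyFunctor C i).map f))
  obtain ⟨B, ⟨e⟩⟩ := exists_iso_singleFunctor_obj_of_isGE_of_isLE Y 0
  obtain ⟨a⟩ := h.1 0 le_rfl (by push_cast; lia)
  have := iso1 0 le_rfl
  let b : B ≅ A := ((singleFunctorCompHomologyFunctorIso C 0).app B).symm ≪≫
    (homologyFunctor C 0).mapIso e.symm ≪≫ asIso ((homologyFunctor C 0).map f) ≪≫ a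
  let u : (singleFunctor C 0).obj A ≅ Y := (singleFunctor C 0).mapIso b.symm ≪≫ e.symm
  refine ⟨Z, u.hom ≫ f, g, d ≫ u.inv⟦(1 : ℤ)⟧', ?_, hZ, ?_, ?_⟩
  · refine isomorphic_distinguished _ hT _
      (Triangle.isoMk _ _ u (Iso.refl _) (Iso.refl _) ?_ ?_ ?_)
    · change (u.hom ≫ f) ≫ 𝟙 X = u.hom ≫ f
      simp
    · change g ≫ 𝟙 Z = 𝟙 X ≫ g
      simp
    · change (d ≫ u.inv⟦(1 : ℤ)⟧') ≫ u.hom⟦(1 : ℤ)⟧' = 𝟙 Z ≫ d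
      simp [← Functor.map_comp]
  · intro i hi hi'
    obtain ⟨a⟩ := h.1 (1 + i) (by lia) (by push_cast; lia)
    have := iso2 (1 + i) (by lia)
    exact ⟨homShift Z i _ rfl ≪≫ (asIso ((homologyFunctor C (1 + i)).map g)).symm ≪≫ a⟩
  · intro i hi
    refine IsZero.of_iso ?_ (homShift Z i _ rfl)
    by_cases h0 : i < 0
    · exact hZ0 _ (by lia)
    · have := iso2 (1 + i) (by lia)
      exact (h.2 (1 + i) (by right; push_cast; lia)).of_iso
        (asIso ((homologyFunctor C (1 + i)).map g)).symm

theorem zero_of_iso {W U V : DerivedCategory C} (e : U ≅ V) (h : ∀ φ : W ⟶ U, φ = 0)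
    (φ : W ⟶ V) : φ = 0 := by
  rw [← cancel_mono e.inv, h (φ ≫ e.inv), zero_comp]

/-- Composite of shifts. -/
noncomputable def shAdd (X : DerivedCategory C) (a b c : ℤ) (h : a + b = c) :
    X⟦c⟧ ≅ X⟦a⟧⟦b⟧ := (shiftFunctorAdd' (DerivedCategory C) a b c h).app X

theorem homIsLine_of_bij {A : C} {U V : DerivedCategory C} (g : U ⟶ V)
    (hinj : ∀ φ : (singleFunctor C 0).obj A ⟶ U, φ ≫ g = 0 → φ = 0)
    (hsurj : ∀ φ : (singleFunctor C 0).obj A ⟶ V, ∃ ψ, φ = ψ ≫ g)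
    (h : HomIsLine k A U) : HomIsLine k A V := by
  obtain ⟨e, he, h⟩ := h
  refine ⟨e ≫ g, fun h0 => he (hinj e h0), fun φ => ?_⟩
  obtain ⟨ψ, rfl⟩ := hsurj φ
  obtain ⟨c, rfl⟩ := h ψ
  exact ⟨c, by simp⟩

theorem homIsLine_of_bij' {A : C} {U V : DerivedCategory C} (g : U ⟶ V)
    (hinj : ∀ φ : (singleFunctor C 0).obj A ⟶ U, φ ≫ g = 0 → φ = 0)
    (hsurj : ∀ φ : (singleFunctor C 0).obj A ⟶ V, ∃ ψ, φ = ψ ≫ g)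
    (h : HomIsLine k A V) : HomIsLine k A U := by
  obtain ⟨e, he, h⟩ := h
  obtain ⟨e, rfl⟩ := hsurj e
  refine ⟨e, fun h0 => he (by rw [h0, zero_comp]), fun φ => ?_⟩
  obtain ⟨c, hc⟩ := h (φ ≫ g)
  refine ⟨c, ?_⟩
  rw [← sub_eq_zero]
  apply hinj
  rw [Preadditive.sub_comp, hc, Category.assoc, sub_self]

theorem homIsLine_of_iso {A : C} {U V : DerivedCategory C} (e : U ≅ V)
    (h : HomIsLine k A U) : HomIsLine k A V :=
  homIsLine_of_bij k e.hom (fun φ hφ => by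
    rw [← cancel_mono e.hom, hφ, zero_comp]) (fun φ => ⟨φ ≫ e.inv, by simp⟩) h

theorem shift_exact₂ (T : Triangle (DerivedCategory C)) (hT : T ∈ distTriang _) (j : ℤ)
    {W : DerivedCategory C} (φ : W ⟶ T.obj₂⟦j⟧) (h : φ ≫ T.mor₂⟦j⟧' = 0) :
    ∃ ψ : W ⟶ T.obj₁⟦j⟧, φ = ψ ≫ T.mor₁⟦j⟧' := by
  obtain ⟨ψ, hψ⟩ := Triangle.coyoneda_exact₂ _ (Triangle.shift_distinguished T hT j) φ (by
    change φ ≫ (j.negOnePow • T.mor₂⟦j⟧') = 0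
    rw [Linear.comp_units_smul, h, smul_zero])
  change W ⟶ T.obj₁⟦j⟧ at ψ
  change φ = ψ ≫ (j.negOnePow • T.mor₁⟦j⟧') at hψ
  exact ⟨j.negOnePow • ψ, by rw [hψ, Linear.comp_units_smul, Linear.units_smul_comp]⟩

theorem shift_exact₃ (T : Triangle (DerivedCategory C)) (hT : T ∈ distTriang _) (j : ℤ)
    {W : DerivedCategory C} (φ : W ⟶ T.obj₃⟦j⟧) (h : φ ≫ T.mor₃⟦j⟧' = 0) :
    ∃ ψ : W ⟶ T.obj₂⟦j⟧, φ = ψ ≫ T.mor₂⟦j⟧' :=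
  shift_exact₂ _ (rot_of_distTriang _ hT) j φ h

theorem shift_exact₁ (T : Triangle (DerivedCategory C)) (hT : T ∈ distTriang _) (j : ℤ)
    {W : DerivedCategory C} (φ : W ⟶ T.obj₁⟦(1 : ℤ)⟧⟦j⟧)
    (h : φ ≫ T.mor₁⟦(1 : ℤ)⟧'⟦j⟧' = 0) :
    ∃ ψ : W ⟶ T.obj₃⟦j⟧, φ = ψ ≫ T.mor₃⟦j⟧' :=
  shift_exact₂ _ (rot_of_distTriang _ (rot_of_distTriang _ hT)) j φ (by
    change φ ≫ (-(T.mor₁⟦(1 : ℤ)⟧'))⟦j⟧' = 0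
    rw [Functor.map_neg, Preadditive.comp_neg, h, neg_zero])

section
variable {P Q R : DerivedCategory C} {f : P ⟶ Q} {g : Q ⟶ R} {d : R ⟶ P⟦(1 : ℤ)⟧}

theorem sh₂ (hT : Triangle.mk f g d ∈ distTriang _) (j : ℤ)
    {W : DerivedCategory C} (φ : W ⟶ Q⟦j⟧) (h : φ ≫ g⟦j⟧' = 0) :
    ∃ ψ : W ⟶ P⟦j⟧, φ = ψ ≫ f⟦j⟧' :=
  shift_exact₂ _ hT j φ h

theorem sh₃ (hT : Triangle.mk f g d ∈ distTriang _) (j : ℤ)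
    {W : DerivedCategory C} (φ : W ⟶ R⟦j⟧) (h : φ ≫ d⟦j⟧' = 0) :
    ∃ ψ : W ⟶ Q⟦j⟧, φ = ψ ≫ g⟦j⟧' :=
  shift_exact₃ _ hT j φ h

theorem sh₁ (hT : Triangle.mk f g d ∈ distTriang _) (j : ℤ)
    {W : DerivedCategory C} (φ : W ⟶ P⟦(1 : ℤ)⟧⟦j⟧) (h : φ ≫ f⟦(1 : ℤ)⟧'⟦j⟧' = 0) :
    ∃ ψ : W ⟶ R⟦j⟧, φ = ψ ≫ d⟦j⟧' :=
  shift_exact₁ _ hT j φ h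

theorem yo₂ (hT : Triangle.mk f g d ∈ distTriang _)
    {W : DerivedCategory C} (φ : Q ⟶ W) (h : f ≫ φ = 0) :
    ∃ ψ : R ⟶ W, φ = g ≫ ψ :=
  Triangle.yoneda_exact₂ _ hT φ h

theorem co₁ (hT : Triangle.mk f g d ∈ distTriang _)
    {W : DerivedCategory C} (φ : W ⟶ P) (h : φ ≫ f = 0) :
    ∃ (ψ : W ⟶ R⟦(-1 : ℤ)⟧) (e : R⟦(-1 : ℤ)⟧ ⟶ P), φ = ψ ≫ e := by
  obtain ⟨ψ, hψ⟩ := Triangle.coyoneda_exact₂ _ (inv_rot_of_distTriang _ hT) φ h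
  exact ⟨ψ, _, hψ⟩

end

theorem ext_zero {A : C} (hA : GoodBase k A) (j : ℤ) (hj : 3 ≤ j)
    (φ : (singleFunctor C 0).obj A ⟶ ((singleFunctor C 0).obj A)⟦j⟧) : φ = 0 := by
  obtain ⟨m, rfl⟩ := Int.eq_ofNat_of_zero_le (by lia : 0 ≤ j)
  exact hA.2.2 m (by lia) (by lia) φ

/-- Maps from an iterated extension of `A, A[-1], ...` to `A[j]`, `j ≥ 3`, vanish. -/
theorem vanish {A : C} (hA : GoodBase k A) (n : ℕ) : ∀ (Y : DerivedCategory C),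
    HasHom A n Y → ∀ (j : ℤ), 3 ≤ j → ∀ φ : Y ⟶ ((singleFunctor C 0).obj A)⟦j⟧, φ = 0 := by
  induction n with
  | zero =>
    intro Y hY j _ φ
    exact (isZero_of_hasHom_zero hY).eq_of_src _ _
  | succ n ih =>
    intro Y hY j hj φ
    obtain ⟨Z, f, g, d, hT, _, hZ⟩ := exists_step hY
    obtain ⟨χ, hχ⟩ := yo₂ hT φ (ext_zero k hA j hj _)
    have h0 : χ = 0 := by
      apply (shiftFunctor (DerivedCategory C) (1 : ℤ)).map_injective
      rw [Functor.map_zero]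
      exact zero_of_iso (shAdd _ j 1 (j + 1) rfl) (ih _ hZ (j + 1) (by lia)) _
    rw [hχ, h0, comp_zero]

theorem hasHom_of_isTypeA {A : C} {n : ℕ} {X : DerivedCategory C} (h : IsTypeA k A n X) :
    HasHom A (n + 1) X :=
  ⟨fun i h0 h1 => h.1 i h0 (by push_cast at h1; lia),
    fun i hi => h.2.1 i (by push_cast at hi; lia)⟩

theorem isTypeA_step {A : C} (hA : GoodBase k A) {n : ℕ} {X Z : DerivedCategory C}
    (hX : IsTypeA k A (n + 1) X)
    (f : (singleFunctor C 0).obj A ⟶ X) (g : X ⟶ Z)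
    (d : Z ⟶ ((singleFunctor C 0).obj A)⟦(1 : ℤ)⟧)
    (hT : Triangle.mk f g d ∈ distTriang _) (hZ : Z.IsGE 1)
    (hH : HasHom A (n + 1) (Z⟦(1 : ℤ)⟧)) : IsTypeA k A n (Z⟦(1 : ℤ)⟧) := by
  obtain ⟨-, -, hX1, hX0⟩ := hX
  push_cast at hX1 hX0
  refine ⟨fun i h0 h1 => hH.1 i h0 (by push_cast; lia),
    fun i hi => hH.2 i (by push_cast; lia), ?_, ?_⟩
  · rintro j (rfl | rfl)
    · refine homIsLine_of_iso k (shAdd Z 1 0 1 (by lia)) ?_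
      refine homIsLine_of_bij' k (d⟦(1 : ℤ)⟧') ?_ ?_
        (homIsLine_of_iso k (shAdd _ 1 1 2 (by lia)) hA.2.1)
      · intro φ hφ
        obtain ⟨ψ, rfl⟩ := sh₃ hT 1 φ hφ
        rw [hX0 1 (by lia) (by lia) ψ, zero_comp]
      · intro φ
        exact sh₁ hT 1 φ
          (zero_of_iso (shAdd X 1 1 2 (by lia)) (hX0 2 (by lia) (by lia)) _)
    · refine homIsLine_of_iso k (shAdd Z 1 (n + 2) (n + 3) (by lia)) ?_
      refine homIsLine_of_bij k (g⟦((n : ℤ) + 3)⟧') ?_ ?_ (hX1 _ (by lia))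
      · intro φ hφ
        obtain ⟨ψ, rfl⟩ := sh₂ hT _ φ hφ
        rw [ext_zero k hA _ (by lia) ψ, zero_comp]
      · intro φ
        exact sh₃ hT _ φ
          (zero_of_iso (shAdd _ 1 (n + 3) (n + 4) (by lia)) (ext_zero k hA _ (by lia)) _)
  · intro j h1 h2
    refine zero_of_iso (shAdd Z 1 j (1 + j) rfl) fun φ => ?_
    by_cases hj : 1 + j ≤ 0
    · have := TStructure.t.isGE_shift Z 1 (1 + j) (-j)
      exact TStructure.t.zero φ 0 (-j)
    · obtain ⟨ψ, rfl⟩ := sh₃ hT _ φ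
        (zero_of_iso (shAdd _ 1 (1 + j) (2 + j) (by lia)) (ext_zero k hA _ (by lia)) _)
      rw [hX0 (1 + j) (by lia) (by lia) ψ, zero_comp]

theorem map_smul_single {A : C} (c : k) : (singleFunctor C 0).map (c • 𝟙 A) =
    c • 𝟙 ((singleFunctor C 0).obj A) := by
  rw [Functor.map_smul, CategoryTheory.Functor.map_id]

theorem single_id_ne_zero {A : C} (hA : GoodBase k A) :
    𝟙 ((singleFunctor C 0).obj A) ≠ 0 := by
  intro h
  have h0 : 𝟙 A = 0 := (singleFunctor C 0).map_injective (by
    rw [CategoryTheory.Functor.map_id, h, Functor.map_zero])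
  have : Subsingleton (A ⟶ A) := ⟨fun a b => ((IsZero.iff_id_eq_zero A).2 h0).eq_of_src a b⟩
  have := hA.1
  rw [Module.finrank_zero_of_subsingleton] at this
  lia

/-- Two nonzero elements of a line are proportional. -/
theorem prop_of_line {A : C} {U : DerivedCategory C} (h : HomIsLine k A U)
    (x y : (singleFunctor C 0).obj A ⟶ U) (hx : x ≠ 0) (hy : y ≠ 0) :
    ∃ c : k, c ≠ 0 ∧ y = c • x := by
  obtain ⟨e, he, h⟩ := h
  obtain ⟨a, ha⟩ := h x
  obtain ⟨b, hb⟩ := h y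
  rw [map_smul_single, Linear.smul_comp, Category.id_comp] at ha hb
  have ha0 : a ≠ 0 := by rintro rfl; exact hx (by rw [ha, zero_smul])
  have hb0 : b ≠ 0 := by rintro rfl; exact hy (by rw [hb, zero_smul])
  refine ⟨b * a⁻¹, mul_ne_zero hb0 (inv_ne_zero ha0), ?_⟩
  rw [ha, hb, smul_smul, mul_assoc, inv_mul_cancel₀ ha0, mul_one]

/-- **Lemma 3.4 (uniqueness part).** If `A` satisfies the hypotheses (3.3), then for every
`n ∈ ℕ`, any two objects of type `Aₙ` in the derived category of `C` are isomorphic. -/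
theorem stmt5 (A : C) (hA : GoodBase k A) (n : ℕ)
    (X X' : DerivedCategory C) (hX : IsTypeA k A n X) (hX' : IsTypeA k A n X') :
    Nonempty (X ≅ X') := by
  induction n generalizing X X' with
  | zero =>
    have key : ∀ Y : DerivedCategory C, IsTypeA k A 0 Y →
        Nonempty ((singleFunctor C 0).obj A ≅ Y) := by
      intro Y hY
      obtain ⟨Z, f, g, d, hT, _, hZ⟩ := exists_step (hasHom_of_isTypeA k hY)
      have hz : IsZero Z := by
        have h1 := isZero_of_hasHom_zero hZ
        rw [IsZero.iff_id_eq_zero] at h1 ⊢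
        apply (shiftFunctor (DerivedCategory C) (1 : ℤ)).map_injective
        rw [Functor.map_zero, CategoryTheory.Functor.map_id, h1]
      have : IsIso f := (Triangle.isZero₃_iff_isIso₁ _ hT).1 hz
      exact ⟨asIso f⟩
    obtain ⟨e⟩ := key X hX
    obtain ⟨e'⟩ := key X' hX'
    exact ⟨e.symm ≪≫ e'⟩
  | succ n ih =>
    obtain ⟨Z, f, g, d, hT, hZ, hH⟩ := exists_step (hasHom_of_isTypeA k hX)
    obtain ⟨Z', f', g', d', hT', hZ', hH'⟩ := exists_step (hasHom_of_isTypeA k hX')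
    obtain ⟨E⟩ := ih _ _ (isTypeA_step k hA hX f g d hT hZ hH)
      (isTypeA_step k hA hX' f' g' d' hT' hZ' hH')
    let φ : Z ≅ Z' := (shiftFunctor (DerivedCategory C) (1 : ℤ)).preimageIso E
    obtain ⟨W, i, p, q, hW, hW1, hWH⟩ := exists_step hH
    have hi : i ≠ 0 := by
      intro h0
      obtain ⟨s, r, hs⟩ := co₁ hW (𝟙 ((singleFunctor C 0).obj A)) (by rw [h0, comp_zero])
      have hs0 : s = 0 := by
        have := TStructure.t.isGE_shift W 1 (-1) 2
        exact TStructure.t.zero s 0 2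
      rw [hs0, zero_comp] at hs
      exact single_id_ne_zero k hA hs
    have inj : ∀ {X Z : DerivedCategory C} (f : (singleFunctor C 0).obj A ⟶ X) (g : X ⟶ Z)
        (d : Z ⟶ ((singleFunctor C 0).obj A)⟦(1 : ℤ)⟧),
        Triangle.mk f g d ∈ distTriang _ → IsTypeA k A (n + 1) X →
        ∀ x : (singleFunctor C 0).obj A ⟶ Z⟦(1 : ℤ)⟧, x ≠ 0 → x ≫ d⟦(1 : ℤ)⟧' ≠ 0 := by
      intro X Z f g d hT hX x hx h0
      obtain ⟨ψ, rfl⟩ := sh₃ hT 1 x h0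
      exact hx (by rw [hX.2.2.2 1 (by lia) (by push_cast; lia) ψ, zero_comp])
    have h1 := inj f g d hT hX i hi
    have h2 := inj f' g' d' hT' hX' (i ≫ φ.hom⟦(1 : ℤ)⟧') (by
      intro h0
      apply hi
      rw [← cancel_mono (φ.hom⟦(1 : ℤ)⟧'), h0, zero_comp])
    obtain ⟨c, hc, hcc⟩ := prop_of_line k
      (homIsLine_of_iso k (shAdd _ 1 1 2 (by lia)) hA.2.1) _ _ h1 h2
    have hd : φ.hom ≫ d' - c • d = 0 := by
      apply (shiftFunctor (DerivedCategory C) (1 : ℤ)).map_injective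
      rw [Functor.map_zero]
      obtain ⟨χ, hχ⟩ := yo₂ hW ((φ.hom ≫ d' - c • d)⟦(1 : ℤ)⟧') (by
        rw [Functor.map_sub, Functor.map_comp, Functor.map_smul, Preadditive.comp_sub,
          ← Category.assoc, hcc, Linear.comp_smul, sub_self])
      have h0 : χ = 0 := by
        apply (shiftFunctor (DerivedCategory C) (1 : ℤ)).map_injective
        rw [Functor.map_zero]
        exact zero_of_iso (shAdd _ 2 1 3 (by lia) ≪≫
          (shiftFunctor (DerivedCategory C) (1 : ℤ)).mapIso (shAdd _ 1 1 2 (by lia)))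
          (vanish k hA n _ hWH 3 le_rfl) _
      rw [hχ, h0, comp_zero]
    let u : (singleFunctor C 0).obj A ≅ (singleFunctor C 0).obj A :=
      { hom := c • 𝟙 _
        inv := c⁻¹ • 𝟙 _
        hom_inv_id := by simp [smul_smul, hc]
        inv_hom_id := by simp [smul_smul, hc] }
    let I := isoTriangleOfIso₁₃ _ _ hT hT' u φ (by
      change d ≫ (c • 𝟙 _)⟦(1 : ℤ)⟧' = φ.hom ≫ d'
      rw [sub_eq_zero.1 hd, Functor.map_smul, CategoryTheory.Functor.map_id, Linear.comp_smul,
        Category.comp_id])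
    exact ⟨Triangle.π₂.mapIso I⟩

end ThreeCusps
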